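/- arXiv:2508.02996 — 4 statements merged into one kernel-verified Lean document; each statement's English description precedes it below -/
import Mathlib

section
/- Let k and n be positive integers, let A_1, A_2, A_3 be finite sets each of cardinality at most q^n, and suppose there exist maps φ_1 : F^k × F^k × F^k → A_1, φ_2 : F^k × F^k → A_2, φ_3 : F^k × F^k → A_3 and a map ψ : A_1 × A_2 × A_3 → F^k × F^k such that ψ(φ_1(x_1,x_2,x_3), φ_2(x_1,x_3), φ_3(x_2,x_3)) = (x_1 + x_2, x_3) for all x_1, x_2, x_3 ∈ F^k. Then 4n ≥ 3k. -/
/-!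
All that matters about the sum `f x₁ x₂ = x₁ + x₂` is that it is injective in each argument. For
fixed `x₃`, pick one representative `r` in each fibre of `φ₃ · x₃`. Encoders 2 and 3 cannot tell
`(x₁, x₂, x₃)` from `(x₁, r, x₃)`, where `r` is the representative of the fibre of `x₂`, so the pair
`(f x₁ r, x₃)` is decoded from their outputs and one symbol of encoder 1; as `r` is then known,
this determines `x₁` and `x₃`. A second symbol of encoder 1, its output on `(x₀, x₂, x₃)` for a
fixed `x₀`, lets the decoder find `f x₀ x₂`, hence `x₂`. So all three sources are determined by two
outputs of encoder 1 and one output of each of the others.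
-/

section FiberRep

variable {α β : Type*} {g : α → β}

/-- A representative of the fibre of `g` through `a`, used to replace a source by one that depends
only on its encoding. It is defined from `a` rather than from `g a` so that `α` may be empty. -/
noncomputable def fiberRep (g : α → β) (a : α) : α :=
  haveI : Nonempty α := ⟨a⟩
  Function.invFun g (g a)

theorem apply_fiberRep (g : α → β) (a : α) : g (fiberRep g a) = g a :=
  haveI : Nonempty α := ⟨a⟩
  Function.invFun_eq ⟨a, rfl⟩

theorem fiberRep_congr {a b : α} (h : g a = g b) : fiberRep g a = fiberRep g b := by
  simp only [fiberRep, h]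

end FiberRep

section Code

variable {X₁ X₂ X₃ Y A₁ A₂ A₃ : Type*}

/-- The encoders `φ₁`, `φ₂`, `φ₃`, observing `(x₁, x₂, x₃)`, `(x₁, x₃)` and `(x₂, x₃)` respectively,
let the decoder `ψ` compute `(f x₁ x₂, x₃)` without error. This is the model `(3,3,Ω₂,T₂)` with the
sum `x₁ + x₂` replaced by an arbitrary function of `x₁` and `x₂`. -/
def IsZeroErrorCode (f : X₁ → X₂ → Y) (φ₁ : X₁ → X₂ → X₃ → A₁) (φ₂ : X₁ → X₃ → A₂)
    (φ₃ : X₂ → X₃ → A₃) (ψ : A₁ → A₂ → A₃ → Y × X₃) : Prop :=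
  ∀ x₁ x₂ x₃, ψ (φ₁ x₁ x₂ x₃) (φ₂ x₁ x₃) (φ₃ x₂ x₃) = (f x₁ x₂, x₃)

/-- The two outputs of encoder 1, one of encoder 2 and one of encoder 3 that together determine all
three sources: encoder 1 is applied once with `x₂` replaced by its representative given `φ₃ x₂ x₃`,
and once with `x₁` replaced by the fixed `x₀`. -/
noncomputable def augmentedEncoding (φ₁ : X₁ → X₂ → X₃ → A₁) (φ₂ : X₁ → X₃ → A₂)
    (φ₃ : X₂ → X₃ → A₃) (x₀ : X₁) : X₁ × X₂ × X₃ → A₁ × A₁ × A₂ × A₃ :=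
  fun (x₁, x₂, x₃) ↦
    (φ₁ x₁ (fiberRep (φ₃ · x₃) x₂) x₃, φ₁ x₀ x₂ x₃, φ₂ x₁ x₃, φ₃ x₂ x₃)

namespace IsZeroErrorCode

variable {f : X₁ → X₂ → Y} {φ₁ : X₁ → X₂ → X₃ → A₁} {φ₂ : X₁ → X₃ → A₂} {φ₃ : X₂ → X₃ → A₃}
  {ψ : A₁ → A₂ → A₃ → Y × X₃}

theorem target_eq_of_outputs_eq (h : IsZeroErrorCode f φ₁ φ₂ φ₃ ψ) {x₁ x₁' : X₁} {x₂ x₂' : X₂}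
    {x₃ x₃' : X₃} (h₁ : φ₁ x₁ x₂ x₃ = φ₁ x₁' x₂' x₃') (h₂ : φ₂ x₁ x₃ = φ₂ x₁' x₃')
    (h₃ : φ₃ x₂ x₃ = φ₃ x₂' x₃') : f x₁ x₂ = f x₁' x₂' ∧ x₃ = x₃' := by
  rw [← Prod.mk.injEq, ← h x₁ x₂ x₃, ← h x₁' x₂' x₃', h₁, h₂, h₃]

theorem augmentedEncoding_injective (h : IsZeroErrorCode f φ₁ φ₂ φ₃ ψ)
    (hf : ∀ x₂, Function.Injective (f · x₂)) {x₀ : X₁} (hf₀ : Function.Injective (f x₀)) :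
    Function.Injective (augmentedEncoding φ₁ φ₂ φ₃ x₀) := by
  rintro ⟨x₁, x₂, x₃⟩ ⟨x₁', x₂', x₃'⟩ heq
  simp only [augmentedEncoding, Prod.mk.injEq] at heq
  obtain ⟨hrep, hfixed, h₂, h₃⟩ := heq
  have h₃_rep : φ₃ (fiberRep (φ₃ · x₃) x₂) x₃ = φ₃ (fiberRep (φ₃ · x₃') x₂') x₃' :=
    (apply_fiberRep (φ₃ · x₃) x₂).trans (h₃.trans (apply_fiberRep (φ₃ · x₃') x₂').symm)
  obtain ⟨hf_rep, rfl⟩ := h.target_eq_of_outputs_eq hrep h₂ h₃_rep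
  rw [fiberRep_congr (g := (φ₃ · x₃)) h₃] at hf_rep
  obtain rfl : x₁ = x₁' := hf _ hf_rep
  obtain rfl : x₂ = x₂' := hf₀ (h.target_eq_of_outputs_eq hfixed rfl h₃).1
  rfl

theorem card_mul_card_mul_card_le [Fintype X₁] [Fintype X₂] [Fintype X₃] [Fintype A₁] [Fintype A₂]
    [Fintype A₃] (h : IsZeroErrorCode f φ₁ φ₂ φ₃ ψ) (hf : ∀ x₂, Function.Injective (f · x₂))
    {x₀ : X₁} (hf₀ : Function.Injective (f x₀)) :
    Fintype.card X₁ * Fintype.card X₂ * Fintype.card X₃ ≤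
      Fintype.card A₁ ^ 2 * Fintype.card A₂ * Fintype.card A₃ := by
  simpa only [Fintype.card_prod, sq, mul_assoc] using
    Fintype.card_le_of_injective _ (h.augmentedEncoding_injective hf hf₀)

end IsZeroErrorCode

theorem stmt9_general [Fintype X₁] [Fintype X₂] [Fintype X₃] [Fintype A₁] [Fintype A₂] [Fintype A₃]
    {q k₁ k₂ k₃ n₁ n₂ n₃ : ℕ} (hq : 1 < q)
    (hX₁ : q ^ k₁ ≤ Fintype.card X₁) (hX₂ : q ^ k₂ ≤ Fintype.card X₂)
    (hX₃ : q ^ k₃ ≤ Fintype.card X₃) (hA₁ : Fintype.card A₁ ≤ q ^ n₁)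
    (hA₂ : Fintype.card A₂ ≤ q ^ n₂) (hA₃ : Fintype.card A₃ ≤ q ^ n₃)
    {f : X₁ → X₂ → Y} (hf : ∀ x₂, Function.Injective (f · x₂))
    {x₀ : X₁} (hf₀ : Function.Injective (f x₀))
    {φ₁ : X₁ → X₂ → X₃ → A₁} {φ₂ : X₁ → X₃ → A₂} {φ₃ : X₂ → X₃ → A₃} {ψ : A₁ → A₂ → A₃ → Y × X₃}
    (h : IsZeroErrorCode f φ₁ φ₂ φ₃ ψ) :
    k₁ + k₂ + k₃ ≤ 2 * n₁ + n₂ + n₃ := by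
  refine (Nat.pow_le_pow_iff_right hq).mp ?_
  calc q ^ (k₁ + k₂ + k₃)
      = q ^ k₁ * q ^ k₂ * q ^ k₃ := by rw [pow_add, pow_add]
    _ ≤ Fintype.card X₁ * Fintype.card X₂ * Fintype.card X₃ := by gcongr
    _ ≤ Fintype.card A₁ ^ 2 * Fintype.card A₂ * Fintype.card A₃ :=
        h.card_mul_card_mul_card_le hf hf₀
    _ ≤ (q ^ n₁) ^ 2 * q ^ n₂ * q ^ n₃ := by gcongr
    _ = q ^ (2 * n₁ + n₂ + n₃) := by ring

end Code

/-- Converse for the model `(3,3,Ω₂,T₂)`: if encoder 1 observes `(x₁,x₂,x₃)`, encoder 2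
observes `(x₁,x₃)`, encoder 3 observes `(x₂,x₃)`, each encoder outputs at most `q^n`
values, and the decoder computes `(x₁+x₂, x₃)` with zero error, then `4n ≥ 3k`. -/
theorem stmt9 (F : Type*) [Field F] [Fintype F] (k n : ℕ) (hk : 0 < k) (hn : 0 < n)
    (A₁ A₂ A₃ : Type*) [Fintype A₁] [Fintype A₂] [Fintype A₃]
    (h₁ : Fintype.card A₁ ≤ Fintype.card F ^ n)
    (h₂ : Fintype.card A₂ ≤ Fintype.card F ^ n)
    (h₃ : Fintype.card A₃ ≤ Fintype.card F ^ n)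
    (φ₁ : (Fin k → F) → (Fin k → F) → (Fin k → F) → A₁)
    (φ₂ : (Fin k → F) → (Fin k → F) → A₂)
    (φ₃ : (Fin k → F) → (Fin k → F) → A₃)
    (ψ : A₁ → A₂ → A₃ → (Fin k → F) × (Fin k → F))
    (hdec : ∀ x₁ x₂ x₃ : Fin k → F,
      ψ (φ₁ x₁ x₂ x₃) (φ₂ x₁ x₃) (φ₃ x₂ x₃) = (x₁ + x₂, x₃)) :
    3 * k ≤ 4 * n := by
  have hcard : Fintype.card F ^ k ≤ Fintype.card (Fin k → F) := by simp
  linarith [stmt9_general Fintype.one_lt_card hcard hcard hcard h₁ h₂ h₃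
    add_left_injective (add_right_injective 0) hdec]
end

section
/- Let k and n be positive integers, let A_1, A_2, A_3 be finite sets each of cardinality at most q^n, and suppose there exist maps φ_1 : F^k × F^k × F^k → A_1, φ_2 : F^k × F^k → A_2, φ_3 : F^k × F^k → A_3 and a map ψ : A_1 × A_2 × A_3 → F^k × F^k such that ψ(φ_1(x_1,x_2,x_3), φ_2(x_1,x_3), φ_3(x_2,x_3)) = (x_1 + x_2, x_3) for all x_1, x_2, x_3 ∈ F^k. Then for every b ∈ F^k, the set {φ_2(x_1, b) : x_1 ∈ F^k} has cardinality N satisfying q^n · N ≥ q^k. -/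
theorem card_le_card_mul_ncard_range_of_injective_prodMk {α β γ : Type*} [Finite α] [Finite β]
    {f : α → β} {g : α → γ} (hfg : Function.Injective fun x => (f x, g x)) :
    Nat.card α ≤ Nat.card β * (Set.range g).ncard := by
  have hinj : Function.Injective fun x => (f x, Set.rangeFactorization g x) :=
    Function.Injective.of_comp (f := Prod.map id Subtype.val) hfg
  calc
    Nat.card α ≤ Nat.card (β × Set.range g) := Nat.card_le_card_of_injective _ hinj
    _ = Nat.card β * (Set.range g).ncard := by rw [Nat.card_prod, Nat.card_coe_set_eq]

section ZeroErrorCode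

variable {X Y Z A₁ A₂ A₃ W : Type*}
  {φ₁ : X → Y → Z → A₁} {φ₂ : X → Z → A₂} {φ₃ : Y → Z → A₃} {ψ : A₁ → A₂ → A₃ → W}
  {target : X → Y → Z → W} {a : Y} {b : Z}

-- Once `x₂ = a` and `x₃ = b` are fixed, the third message is a constant known to the decoder.
theorem injective_prodMk_of_decodes
    (hdec : ∀ x₁ x₂ x₃, ψ (φ₁ x₁ x₂ x₃) (φ₂ x₁ x₃) (φ₃ x₂ x₃) = target x₁ x₂ x₃)
    (htarget : Function.Injective fun x₁ => target x₁ a b) :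
    Function.Injective fun x₁ => (φ₁ x₁ a b, φ₂ x₁ b) := by
  refine Function.Injective.of_comp (f := fun p => ψ p.1 p.2 (φ₃ a b)) ?_
  simpa only [Function.comp_def, hdec] using htarget

theorem stmt10_general [Finite X] [Finite A₁]
    (hdec : ∀ x₁ x₂ x₃, ψ (φ₁ x₁ x₂ x₃) (φ₂ x₁ x₃) (φ₃ x₂ x₃) = target x₁ x₂ x₃)
    (htarget : Function.Injective fun x₁ => target x₁ a b) :
    Nat.card X ≤ Nat.card A₁ * (Set.range fun x₁ => φ₂ x₁ b).ncard :=
  card_le_card_mul_ncard_range_of_injective_prodMk (injective_prodMk_of_decodes hdec htarget)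

end ZeroErrorCode

/-- Auxiliary claim in the converse for the model `(3,3,Ω₂,T₂)`: under the same
hypotheses as the converse, for every `b ∈ F^k` the set `{φ₂(x₁,b) : x₁ ∈ F^k}` has
cardinality `N` satisfying `q^n · N ≥ q^k`. -/
theorem stmt10 (F : Type*) [Field F] [Fintype F] (k n : ℕ) (hk : 0 < k) (hn : 0 < n)
    (A₁ A₂ A₃ : Type*) [Fintype A₁] [Fintype A₂] [Fintype A₃]
    (h₁ : Fintype.card A₁ ≤ Fintype.card F ^ n)
    (h₂ : Fintype.card A₂ ≤ Fintype.card F ^ n)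
    (h₃ : Fintype.card A₃ ≤ Fintype.card F ^ n)
    (φ₁ : (Fin k → F) → (Fin k → F) → (Fin k → F) → A₁)
    (φ₂ : (Fin k → F) → (Fin k → F) → A₂)
    (φ₃ : (Fin k → F) → (Fin k → F) → A₃)
    (ψ : A₁ → A₂ → A₃ → (Fin k → F) × (Fin k → F))
    (hdec : ∀ x₁ x₂ x₃ : Fin k → F,
      ψ (φ₁ x₁ x₂ x₃) (φ₂ x₁ x₃) (φ₃ x₂ x₃) = (x₁ + x₂, x₃)) :
    ∀ b : Fin k → F,
      Fintype.card F ^ k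
        ≤ Fintype.card F ^ n * (Set.range fun x₁ : Fin k → F => φ₂ x₁ b).ncard := by
  intro b
  have htarget := (Prod.mk_left_injective b).comp (add_left_injective (0 : Fin k → F))
  simpa using (stmt10_general hdec htarget).trans
    (Nat.mul_le_mul_right _ (Nat.card_eq_fintype_card.trans_le h₁))
end

section
/- There exist maps φ_1 : F^4 × F^4 → F^3, φ_2 : F^4 × F^4 → F^3, φ_3 : F^4 × F^4 → F^3 and a map ψ : F^3 × F^3 × F^3 → F^4 × F^4 such that ψ(φ_1(x_1,x_2), φ_2(x_1,x_3), φ_3(x_2,x_3)) = (x_1 + x_2, x_3) for all x_1, x_2, x_3 ∈ F^4. -/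
/-!
The first two messages are cut into parts of lengths `p` and `q`, the third into parts of lengths
`r` and `s`. Encoder 1 sees both summands, so it sends `p` symbols of the sum itself. The remaining
`q` symbols of the sum are left to the decoder, which receives one summand from encoder 2 and the
other from encoder 3. These two encoders both see `x₃` and share the work of sending it. The three
encoders use `p`, `q + r` and `q + s` symbols, and `p + q = r + s = 4` with loads at most `3` forces
`(p, q, r, s) = (3, 1, 2, 2)`.
-/

namespace BlockCode

variable {M : Type*} {p q r s : ℕ}

/-- The first encoder of the block code: it adds its two messages on their leading part. -/
def encodeSum [Add M] (x₁ x₂ : Fin (p + q) → M) : Fin p → M :=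
  (x₁ + x₂) ∘ Fin.castAdd q

/-- The second encoder of the block code: the trailing part of the first message, followed by the
leading part of the third. -/
def encodeTailHead (x₁ : Fin (p + q) → M) (x₃ : Fin (r + s) → M) : Fin (q + r) → M :=
  Fin.append (x₁ ∘ Fin.natAdd p) (x₃ ∘ Fin.castAdd s)

/-- The third encoder of the block code: the trailing part of the second message, followed by the
trailing part of the third. -/
def encodeTailTail (x₂ : Fin (p + q) → M) (x₃ : Fin (r + s) → M) : Fin (q + s) → M :=
  Fin.append (x₂ ∘ Fin.natAdd p) (x₃ ∘ Fin.natAdd r)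

/-- The component of the decoder of the block code that recovers the sum of the first two
messages. -/
def decodeSum [Add M] (u : Fin p → M) (v : Fin (q + r) → M) (w : Fin (q + s) → M) :
    Fin (p + q) → M :=
  Fin.append u (v ∘ Fin.castAdd r + w ∘ Fin.castAdd s)

/-- The component of the decoder of the block code that recovers the third message. -/
def decodeThird (v : Fin (q + r) → M) (w : Fin (q + s) → M) : Fin (r + s) → M :=
  Fin.append (v ∘ Fin.natAdd q) (w ∘ Fin.natAdd q)

theorem decodeSum_encode [Add M] (x₁ x₂ : Fin (p + q) → M) (x₃ : Fin (r + s) → M) :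
    decodeSum (encodeSum x₁ x₂) (encodeTailHead x₁ x₃) (encodeTailTail x₂ x₃) = x₁ + x₂ := by
  ext i
  cases i using Fin.addCases <;> simp [decodeSum, encodeSum, encodeTailHead, encodeTailTail]

theorem decodeThird_encode (x₁ x₂ : Fin (p + q) → M) (x₃ : Fin (r + s) → M) :
    decodeThird (encodeTailHead x₁ x₃) (encodeTailTail x₂ x₃) = x₃ := by
  ext i
  cases i using Fin.addCases <;> simp [decodeThird, encodeTailHead, encodeTailTail]

end BlockCode

open BlockCode in
theorem stmt11_general (M : Type*) [Add M] (p q r s : ℕ) :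
    ∃ (φ₁ : (Fin (p + q) → M) → (Fin (p + q) → M) → (Fin p → M))
      (φ₂ : (Fin (p + q) → M) → (Fin (r + s) → M) → (Fin (q + r) → M))
      (φ₃ : (Fin (p + q) → M) → (Fin (r + s) → M) → (Fin (q + s) → M))
      (ψ : (Fin p → M) → (Fin (q + r) → M) → (Fin (q + s) → M) →
        (Fin (p + q) → M) × (Fin (r + s) → M)),
      ∀ (x₁ x₂ : Fin (p + q) → M) (x₃ : Fin (r + s) → M),
        ψ (φ₁ x₁ x₂) (φ₂ x₁ x₃) (φ₃ x₂ x₃) = (x₁ + x₂, x₃) :=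
  ⟨encodeSum, encodeTailHead, encodeTailTail, fun u v w => (decodeSum u v w, decodeThird v w),
    fun x₁ x₂ x₃ => Prod.ext (decodeSum_encode x₁ x₂ x₃) (decodeThird_encode x₁ x₂ x₃)⟩

/-- Achievability of coding rate `3/4` for the model `(3,3,Ω₁,T₂)`: there is an
admissible 4-shot code using 3 field symbols per encoder, where encoder 1 observes
`(x₁,x₂)`, encoder 2 observes `(x₁,x₃)`, encoder 3 observes `(x₂,x₃)`, and the decoder
computes `(x₁+x₂, x₃)` with zero error. -/
theorem stmt11 (F : Type*) [Field F] [Fintype F] :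
    ∃ (φ₁ φ₂ φ₃ : (Fin 4 → F) → (Fin 4 → F) → (Fin 3 → F))
      (ψ : (Fin 3 → F) → (Fin 3 → F) → (Fin 3 → F) → (Fin 4 → F) × (Fin 4 → F)),
      ∀ x₁ x₂ x₃ : Fin 4 → F,
        ψ (φ₁ x₁ x₂) (φ₂ x₁ x₃) (φ₃ x₂ x₃) = (x₁ + x₂, x₃) :=
  stmt11_general F 3 1 2 2
end

section
/- There exist maps φ_1 : F^3 × F^3 → F^2, φ_2 : F^3 × F^3 → F^2, φ_3 : F^3 × F^3 → F^2 and a map ψ : F^2 × F^2 × F^2 → F^3 × F^3 such that ψ(φ_1(x_1,x_2), φ_2(x_1,x_3), φ_3(x_2,x_3)) = (x_1 + x_3, x_2 + x_3) for all x_1, x_2, x_3 ∈ F^3. -/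
/-!
In each single shot the three encoders can form `x₁ - x₂`, `x₁ + x₃` and `x₂ + x₃`. The first and
the third of these add up to the second, so any two of them determine the pair of sums, and one
encoder may stay silent. Over three shots let encoder `j` be silent in shot `j`: each encoder then
sends two symbols.
-/

section DiagonalPuncture

variable {n : ℕ} {A : Type*}

/-- Given the rows of a square array from each of which the diagonal entry has been deleted, the
`i`-th column of that array without its diagonal entry: row `j = i.succAbove k` holds the entry of
column `i` at position `k.predAbove i`. -/
def puncturedColumn (m : Fin (n + 1) → Fin n → A) (i : Fin (n + 1)) : Fin n → A :=
  fun k => m (i.succAbove k) (k.predAbove i)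

theorem puncturedColumn_removeNth (y : Fin (n + 1) → Fin (n + 1) → A) (i : Fin (n + 1)) :
    puncturedColumn (fun j => j.removeNth (y j)) i = i.removeNth (fun j => y j i) := by
  funext k
  exact congrArg (y (i.succAbove k)) (Fin.succAbove_succAbove_predAbove i k)

end DiagonalPuncture

section ParityCheck

variable {G : Type*} [AddGroup G]

/-- Erasure decoder of the parity-check code `{c | c 0 + c 2 = c 1}`: recovers `(c 1, c 2)` from
the two symbols that are left once `c i` has been deleted. -/
def erasureDecode : Fin 3 → (Fin 2 → G) → G × G
  | 0, r => (r 0, r 1)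
  | 1, r => (r 0 + r 1, r 1)
  | 2, r => (r 1, -r 0 + r 1)

theorem erasureDecode_removeNth {c : Fin 3 → G} (hc : c 0 + c 2 = c 1) (i : Fin 3) :
    erasureDecode i (i.removeNth c) = (c 1, c 2) := by
  match i with
  | 0 => rfl
  | 1 => exact congrArg (·, c 2) hc
  | 2 => exact congrArg (c 1, ·) (neg_add_eq_of_eq_add hc.symm)

/-- Decoder of the three-shot code in which encoder `j` is silent in shot `j`: `m j` is the message
of encoder `j`, and each shot is treated as a parity-check word with one erasure. -/
def diagonalDecode (m : Fin 3 → Fin 2 → G) : (Fin 3 → G) × (Fin 3 → G) :=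
  (fun i => (erasureDecode i (puncturedColumn m i)).1,
    fun i => (erasureDecode i (puncturedColumn m i)).2)

theorem diagonalDecode_removeNth {y : Fin 3 → Fin 3 → G} (hy : y 0 + y 2 = y 1) :
    diagonalDecode (fun j => j.removeNth (y j)) = (y 1, y 2) := by
  have decode_shot (i : Fin 3) :
      erasureDecode i (puncturedColumn (fun j => j.removeNth (y j)) i) = (y 1 i, y 2 i) := by
    rw [puncturedColumn_removeNth]
    exact erasureDecode_removeNth (congrFun hy i) i
  simp only [diagonalDecode, decode_shot]

end ParityCheck

theorem stmt14_general (G : Type*) [AddGroup G] :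
    ∃ (φ₁ φ₂ φ₃ : (Fin 3 → G) → (Fin 3 → G) → (Fin 2 → G))
      (ψ : (Fin 2 → G) → (Fin 2 → G) → (Fin 2 → G) → (Fin 3 → G) × (Fin 3 → G)),
      ∀ x₁ x₂ x₃ : Fin 3 → G,
        ψ (φ₁ x₁ x₂) (φ₂ x₁ x₃) (φ₃ x₂ x₃) = (x₁ + x₃, x₂ + x₃) := by
  refine ⟨fun x₁ x₂ => Fin.removeNth 0 (x₁ - x₂), fun x₁ x₃ => Fin.removeNth 1 (x₁ + x₃),
    fun x₂ x₃ => Fin.removeNth 2 (x₂ + x₃), fun m₁ m₂ m₃ => diagonalDecode ![m₁, m₂, m₃],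
    fun x₁ x₂ x₃ => ?_⟩
  let y : Fin 3 → Fin 3 → G := ![x₁ - x₂, x₁ + x₃, x₂ + x₃]
  have parity : y 0 + y 2 = y 1 := by
    change x₁ - x₂ + (x₂ + x₃) = x₁ + x₃
    rw [← add_assoc, sub_add_cancel]
  have messages : ![Fin.removeNth 0 (y 0), Fin.removeNth 1 (y 1), Fin.removeNth 2 (y 2)] =
      fun j => j.removeNth (y j) := by
    funext j
    fin_cases j <;> rfl
  exact (congrArg diagonalDecode messages).trans (diagonalDecode_removeNth parity)

/-- Achievability of coding rate `2/3` for the model `(3,3,Ω*,T₁)`: there is an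
admissible 3-shot code using 2 field symbols per encoder, where encoder 1 observes
`(x₁,x₂)`, encoder 2 observes `(x₁,x₃)`, encoder 3 observes `(x₂,x₃)`, and the decoder
computes `(x₁+x₃, x₂+x₃)` with zero error. -/
theorem stmt14 (F : Type*) [Field F] [Fintype F] :
    ∃ (φ₁ φ₂ φ₃ : (Fin 3 → F) → (Fin 3 → F) → (Fin 2 → F))
      (ψ : (Fin 2 → F) → (Fin 2 → F) → (Fin 2 → F) → (Fin 3 → F) × (Fin 3 → F)),
      ∀ x₁ x₂ x₃ : Fin 3 → F,
        ψ (φ₁ x₁ x₂) (φ₂ x₁ x₃) (φ₃ x₂ x₃) = (x₁ + x₃, x₂ + x₃) :=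
  stmt14_general F
end
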